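/- Let λ : ℤ₊ → ℝ satisfy (UB) and let N ≥ 1. For all t ≥ 0, x ∈ W^{N+1} and y' ∈ W^N: Σ_{z ∈ W^{N+1}} det( e^{tL}(x_i, z_j) )_{i,j=1}^{N+1} · ∏_{i=1}^N λ(y'_i)^{−1} · 1(y' ≺ z) = Σ_{y ∈ W^N : y ≺ x} ∏_{i=1}^N λ(y_i)^{−1} · det( e^{tL}(y_i, y'_j) )_{i,j=1}^N, the series on the left converging absolutely. (Equivalently, the Karlin–McGregor semigroups on W^{N+1} and W^N are intertwined: P_t^{N+1} Λ_N^{N+1} = Λ_N^{N+1} P_t^N.) -/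

import Mathlib

open Complex MeasureTheory Finset
open scoped Real ComplexOrder

/-- ψ_x(w) = ∏_{k=0}^{x} λ(k)/(λ(k)−w). -/
noncomputable def psiF (lam : ℕ → ℝ) (x : ℕ) (w : ℂ) : ℂ :=
  ∏ k ∈ Finset.range (x + 1), (lam k : ℂ) / ((lam k : ℂ) - w)

/-- p_x(w) = ∏_{k=0}^{x−1} (λ(k)−w)/λ(k). -/
noncomputable def pF (lam : ℕ → ℝ) (x : ℕ) (w : ℂ) : ℂ :=
  ∏ k ∈ Finset.range x, (((lam k : ℂ) - w) / (lam k : ℂ))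

/-- e^{tL}(x,y) := −(1/λ(y))·(1/(2πi)) ∮_{|w|=R} ψ_y(w) p_x(w) e^{−tw} dw,
the contour being the counterclockwise circle of radius R centred at 0. -/
noncomputable def eL (lam : ℕ → ℝ) (R t : ℝ) (x y : ℕ) : ℂ :=
  -(1 / (lam y : ℂ)) * ((2 * (Real.pi : ℂ) * Complex.I)⁻¹ *
    ∮ w in C(0, R), psiF lam y w * pF lam x w * Complex.exp (-(t : ℂ) * w))

/-- y ≺ x : interlacing, x_1 ≤ y_1 < x_2 ≤ y_2 < ⋯ ≤ y_N < x_{N+1}.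
(Membership of (y,x) in W^{N,N+1} is exactly this condition.) -/
def Interlace {N : ℕ} (y : Fin N → ℕ) (x : Fin (N + 1) → ℕ) : Prop :=
  ∀ i : Fin N, x i.castSucc ≤ y i ∧ y i < x i.succ

instance {N : ℕ} (y : Fin N → ℕ) (x : Fin (N + 1) → ℕ) : Decidable (Interlace y x) :=
  inferInstanceAs (Decidable (∀ i : Fin N, x i.castSucc ≤ y i ∧ y i < x i.succ))

/-- The contour integral `(2πi)⁻¹ ∮ w⁻¹ ∏_{k<n} λ(k)/(λ(k)-w) p_x(w) e^{-tw} dw`, which is the mass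
that `e^{tL}(x, ·)` puts on `{n, n+1, …}`. -/
noncomputable def tailMass (lam : ℕ → ℝ) (R t : ℝ) (x n : ℕ) : ℂ :=
  (2 * (π : ℂ) * I)⁻¹ * ∮ w in C(0, R),
    w⁻¹ * ((∏ k ∈ range n, (lam k : ℂ) / ((lam k : ℂ) - w)) * pF lam x w * exp (-(t : ℂ) * w))

section Contour

variable {lam : ℕ → ℝ} {M : ℝ}

lemma differentiable_pF (lam : ℕ → ℝ) (x : ℕ) : Differentiable ℂ (pF lam x) := by
  unfold pF
  fun_prop

lemma ofReal_sub_ne_zero_of_lt_norm (hpos : ∀ k, 0 < lam k) (hub : ∀ k, lam k ≤ M) {w : ℂ}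
    (hw : M < ‖w‖) (k : ℕ) : (lam k : ℂ) - w ≠ 0 := by
  intro h
  have : ‖w‖ = lam k := by
    rw [← sub_eq_zero.mp h, Complex.norm_real, Real.norm_of_nonneg (hpos k).le]
  linarith [hub k]

lemma differentiableAt_prod_div (hpos : ∀ k, 0 < lam k) (hub : ∀ k, lam k ≤ M) {w : ℂ}
    (hw : M < ‖w‖) (n : ℕ) :
    DifferentiableAt ℂ (fun w => ∏ k ∈ range n, (lam k : ℂ) / ((lam k : ℂ) - w)) w :=
  DifferentiableAt.fun_finsetProd fun k _ =>
    (differentiableAt_const _).div (by fun_prop) (ofReal_sub_ne_zero_of_lt_norm hpos hub hw k)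

lemma differentiableAt_tailMass_integrand (hpos : ∀ k, 0 < lam k) (hub : ∀ k, lam k ≤ M) {w : ℂ}
    (hw : M < ‖w‖) (t : ℝ) (x n : ℕ) :
    DifferentiableAt ℂ (fun w => w⁻¹ * ((∏ k ∈ range n, (lam k : ℂ) / ((lam k : ℂ) - w)) *
      pF lam x w * exp (-(t : ℂ) * w))) w := by
  have hM : 0 < M := (hpos 0).trans_le (hub 0)
  have h0 : w ≠ 0 := norm_pos_iff.mp (hM.trans hw)
  have h1 := differentiableAt_prod_div hpos hub hw n
  have h2 := differentiable_pF lam x w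
  exact (differentiableAt_id.inv h0).mul ((h1.mul h2).mul (by fun_prop))

lemma circleIntegrable_tailMass_integrand (hpos : ∀ k, 0 < lam k) (hub : ∀ k, lam k ≤ M) {R : ℝ}
    (hR : M < R) (t : ℝ) (x n : ℕ) :
    CircleIntegrable (fun w => w⁻¹ * ((∏ k ∈ range n, (lam k : ℂ) / ((lam k : ℂ) - w)) *
      pF lam x w * exp (-(t : ℂ) * w))) 0 R := by
  have hM : 0 < M := (hpos 0).trans_le (hub 0)
  refine ContinuousOn.circleIntegrable (hM.trans hR).le fun w hw => ?_
  rw [mem_sphere_zero_iff_norm] at hw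
  exact (differentiableAt_tailMass_integrand hpos hub
    (hw ▸ hR) t x n).continuousAt.continuousWithinAt

lemma eL_eq_tailMass_sub (hpos : ∀ k, 0 < lam k) (hub : ∀ k, lam k ≤ M) {R : ℝ}
    (hR : M < R) (t : ℝ) (x y : ℕ) :
    eL lam R t x y = tailMass lam R t x y - tailMass lam R t x (y + 1) := by
  have hM : 0 < M := (hpos 0).trans_le (hub 0)
  unfold eL tailMass
  rw [← mul_sub, ← circleIntegral.integral_sub
    (circleIntegrable_tailMass_integrand hpos hub hR t x _)
    (circleIntegrable_tailMass_integrand hpos hub hR t x _), mul_left_comm,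
    ← circleIntegral.integral_const_mul]
  congr 1
  refine circleIntegral.integral_congr (hM.trans hR).le fun w hw => ?_
  rw [mem_sphere_zero_iff_norm] at hw
  have h1 := ofReal_sub_ne_zero_of_lt_norm hpos hub (hw ▸ hR) y
  have h0 : w ≠ 0 := norm_pos_iff.mp (hw ▸ hM.trans hR)
  have h2 : (lam y : ℂ) ≠ 0 := ofReal_ne_zero.mpr (hpos y).ne'
  simp only [psiF, prod_range_succ]
  field_simp
  ring

lemma tailMass_sub_succ (hpos : ∀ k, 0 < lam k) (hub : ∀ k, lam k ≤ M) {R : ℝ}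
    (hR : M < R) (t : ℝ) (v y : ℕ) :
    tailMass lam R t (v + 1) (y + 1) - tailMass lam R t v (y + 1) =
      lam y / lam v * eL lam R t v y := by
  have hM : 0 < M := (hpos 0).trans_le (hub 0)
  have h2 : (lam y : ℂ) ≠ 0 := ofReal_ne_zero.mpr (hpos y).ne'
  have h3 : (lam v : ℂ) ≠ 0 := ofReal_ne_zero.mpr (hpos v).ne'
  unfold eL tailMass
  rw [← mul_sub, ← circleIntegral.integral_sub
    (circleIntegrable_tailMass_integrand hpos hub hR t _ _)
    (circleIntegrable_tailMass_integrand hpos hub hR t _ _),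
    mul_left_comm (-_), mul_left_comm (_ / _),
    ← circleIntegral.integral_const_mul (-_), ← circleIntegral.integral_const_mul (_ / _)]
  congr 1
  refine circleIntegral.integral_congr (hM.trans hR).le fun w hw => ?_
  rw [mem_sphere_zero_iff_norm] at hw
  have h0 : w ≠ 0 := norm_pos_iff.mp (hw ▸ hM.trans hR)
  simp only [psiF, pF, prod_range_succ _ v]
  field_simp
  ring

lemma tailMass_zero (hpos : ∀ k, 0 < lam k) {R : ℝ} (hR : 0 < R) (t : ℝ) (x : ℕ) :
    tailMass lam R t x 0 = 1 := by
  have hd : DifferentiableOn ℂ (fun w : ℂ => pF lam x w * exp (-(t : ℂ) * w))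
      (Metric.closedBall 0 R) := by
    have := differentiable_pF lam x
    exact Differentiable.differentiableOn (by fun_prop)
  have h := DifferentiableOn.circleIntegral_sub_inv_smul (E := ℂ) hd (Metric.mem_ball_self hR)
  have hp : pF lam x 0 = 1 := by
    unfold pF
    exact prod_eq_one fun k _ => by simp [(hpos k).ne']
  simp only [sub_zero, smul_eq_mul, mul_zero, exp_zero, mul_one, hp] at h
  simp only [tailMass, range_zero, prod_empty, one_mul, h]
  exact inv_mul_cancel₀ two_pi_I_ne_zero

lemma tailMass_radius_indep (hpos : ∀ k, 0 < lam k) (hub : ∀ k, lam k ≤ M) {R R' : ℝ}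
    (hR : M < R) (hRR' : R ≤ R') (t : ℝ) (x n : ℕ) :
    tailMass lam R t x n = tailMass lam R' t x n := by
  have hM : 0 < M := (hpos 0).trans_le (hub 0)
  unfold tailMass
  rw [circleIntegral_eq_of_differentiable_on_annulus_off_countable (E := ℂ) (hM.trans hR) hRR'
    Set.countable_empty]
  · intro w hw
    have hw' : M < ‖w‖ := by
      have := hw.2
      rw [mem_ball_zero_iff, not_lt] at this
      exact hR.trans_le this
    exact (differentiableAt_tailMass_integrand hpos hub hw' t x n).continuousAt.continuousWithinAt
  · intro w hw
    have hw' : M < ‖w‖ := by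
      have := hw.1.2
      rw [mem_closedBall_zero_iff, not_le] at this
      exact hR.trans this
    exact differentiableAt_tailMass_integrand hpos hub hw' t x n

lemma exists_norm_tailMass_le (hpos : ∀ k, 0 < lam k) (hub : ∀ k, lam k ≤ M) {R : ℝ}
    (hR : M < R) (t : ℝ) (x : ℕ) :
    ∃ C : ℝ, ∀ n, ‖tailMass lam R t x n‖ ≤ C * (1 / 2) ^ n := by
  have hM : 0 < M := (hpos 0).trans_le (hub 0)
  set R' := R + 2 * M with hR'
  have hR'0 : 0 < R' := by linarith
  have hMR' : M < R' := by linarith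
  have hcont : ContinuousOn (fun w : ℂ => w⁻¹ * ((∏ k ∈ range 0, (lam k : ℂ) / ((lam k : ℂ) - w)) *
      pF lam x w * exp (-(t : ℂ) * w))) (Metric.sphere 0 R') := fun w hw =>
    (differentiableAt_tailMass_integrand hpos hub
      (mem_sphere_zero_iff_norm.mp hw ▸ hMR') t x 0).continuousAt.continuousWithinAt
  obtain ⟨C, hC⟩ := (isCompact_sphere (0 : ℂ) R').exists_bound_of_continuousOn hcont
  refine ⟨R' * C, fun n => ?_⟩
  rw [tailMass_radius_indep hpos hub hR (by linarith : R ≤ R'), tailMass, ← smul_eq_mul,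
    mul_assoc _ C]
  refine circleIntegral.norm_two_pi_i_inv_smul_integral_le_of_norm_le_const (E := ℂ) hR'0.le
    fun w hw => ?_
  have hC' := hC w hw
  rw [mem_sphere_zero_iff_norm] at hw
  have hprod : ‖∏ k ∈ range n, (lam k : ℂ) / ((lam k : ℂ) - w)‖ ≤ (1 / 2) ^ n := by
    rw [norm_prod]
    refine (prod_le_prod (fun _ _ => norm_nonneg _) fun k _ => ?_).trans_eq
      (prod_const (1 / 2 : ℝ) |>.trans (by simp))
    have h1 : R' - M ≤ ‖(lam k : ℂ) - w‖ := by
      have h := norm_sub_norm_le w (lam k : ℂ)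
      rw [norm_sub_rev, Complex.norm_real, Real.norm_of_nonneg (hpos k).le, hw] at h
      linarith [hub k]
    rw [norm_div, Complex.norm_real, Real.norm_of_nonneg (hpos k).le,
      div_le_div_iff₀ (by linarith) two_pos]
    linarith [hub k]
  simp only [range_zero, prod_empty, one_mul, norm_mul] at hC' ⊢
  calc _ = (‖w⁻¹‖ * (‖pF lam x w‖ * ‖exp (-(t : ℂ) * w)‖)) *
        ‖∏ k ∈ range n, (lam k : ℂ) / ((lam k : ℂ) - w)‖ := by ring
    _ ≤ C * (1 / 2) ^ n := by
      simp only [norm_mul] at *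
      gcongr
      exact (by positivity : (0 : ℝ) ≤ _).trans hC'

lemma summable_norm_eL (hpos : ∀ k, 0 < lam k) (hub : ∀ k, lam k ≤ M) {R : ℝ}
    (hR : M < R) (t : ℝ) (x : ℕ) : Summable fun y => ‖eL lam R t x y‖ := by
  obtain ⟨C, hC⟩ := exists_norm_tailMass_le hpos hub hR t x
  have hs : Summable fun n => ‖tailMass lam R t x n‖ :=
    .of_nonneg_of_le (fun _ => norm_nonneg _) hC
      ((summable_geometric_of_lt_one (by norm_num) (by norm_num)).mul_left C)
  refine .of_nonneg_of_le (fun _ => norm_nonneg _) (fun y => ?_)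
    (hs.add ((summable_nat_add_iff 1).mpr hs))
  rw [eL_eq_tailMass_sub hpos hub hR]
  exact norm_sub_le _ _

lemma sum_range_eL (hpos : ∀ k, 0 < lam k) (hub : ∀ k, lam k ≤ M) {R : ℝ}
    (hR : M < R) (t : ℝ) (x n : ℕ) :
    ∑ y ∈ range n, eL lam R t x y = 1 - tailMass lam R t x n := by
  have hM : 0 < M := (hpos 0).trans_le (hub 0)
  simp only [eL_eq_tailMass_sub hpos hub hR, sum_range_sub', tailMass_zero hpos (hM.trans hR)]

lemma tsum_eL (hpos : ∀ k, 0 < lam k) (hub : ∀ k, lam k ≤ M) {R : ℝ}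
    (hR : M < R) (t : ℝ) (x : ℕ) : ∑' y, eL lam R t x y = 1 := by
  have hlim : Filter.Tendsto (tailMass lam R t x) Filter.atTop (nhds 0) := by
    obtain ⟨C, hC⟩ := exists_norm_tailMass_le hpos hub hR t x
    refine squeeze_zero_norm hC ?_
    simpa using (tendsto_pow_atTop_nhds_zero_of_lt_one (by norm_num : (0 : ℝ) ≤ 1 / 2)
      (by norm_num)).const_mul C
  refine tendsto_nhds_unique (summable_norm_eL hpos hub hR t x).of_norm.hasSum.tendsto_sum_nat ?_
  simp only [sum_range_eL hpos hub hR]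
  simpa using hlim.const_sub 1

end Contour
/-- A finite product of absolutely convergent series is the absolutely convergent sum over all
tuples of indices. -/
lemma hasSum_prod_pi {A : Type*} [NormedCommRing A] [CompleteSpace A] {n : ℕ}
    (f : Fin n → ℕ → A) (hf : ∀ j, Summable fun m => ‖f j m‖) :
    HasSum (fun z : Fin n → ℕ => ∏ j, f j (z j)) (∏ j, ∑' m, f j m) ∧
      Summable fun z : Fin n → ℕ => ‖∏ j, f j (z j)‖ := by
  induction n with
  | zero => exact ⟨by simp, .of_finite⟩
  | succ n ih =>
    obtain ⟨h1, h2⟩ := ih (fun j => f j.succ) fun j => hf j.succ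
    have hs := summable_mul_of_summable_norm (hf 0) h2
    constructor
    · rw [← (Fin.consEquiv fun _ : Fin (n + 1) => ℕ).hasSum_iff, Fin.prod_univ_succ]
      simpa [Function.comp_def, Fin.prod_univ_succ] using (hf 0).of_norm.hasSum.mul h1 hs
    · rw [← (Fin.consEquiv fun _ : Fin (n + 1) => ℕ).summable_iff]
      exact ((hf 0).mul_norm h2).congr fun z => by simp [Fin.prod_univ_succ]

/-- Multilinearity of the determinant in the columns, for absolutely convergent series. -/
lemma hasSum_det_of {A : Type*} [NormedCommRing A] [CompleteSpace A] {n : ℕ}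
    (f : Fin n → Fin n → ℕ → A) (hf : ∀ i j, Summable fun m => ‖f i j m‖) :
    HasSum (fun z : Fin n → ℕ => (Matrix.of fun i j => f i j (z j)).det)
      (Matrix.of fun i j => ∑' m, f i j m).det ∧
      Summable fun z : Fin n → ℕ => ‖(Matrix.of fun i j => f i j (z j)).det‖ := by
  have h (σ : Equiv.Perm (Fin n)) := hasSum_prod_pi (fun j => f (σ j) j) fun j => hf _ _
  simp only [Matrix.det_apply, Matrix.of_apply]
  constructor
  · exact hasSum_sum fun σ _ => (h σ).1.const_smul _
  · refine .of_nonneg_of_le (fun _ => norm_nonneg _) (fun z => norm_sum_le _ _)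
      (summable_sum fun σ _ => (h σ).2.congr fun z => ?_)
    rcases Int.units_eq_one_or (Equiv.Perm.sign σ) with h | h <;> simp [h]

/-- Multilinearity of the determinant in the rows. -/
lemma det_of_sum_rows {A ι : Type*} [CommRing A] {n : ℕ} (s : Fin n → Finset ι)
    (g : ι → Fin n → A) :
    (Matrix.of fun i j => ∑ v ∈ s i, g v j).det =
      ∑ y ∈ Fintype.piFinset s, (Matrix.of fun i j => g (y i) j).det := by
  have h := (Matrix.detRowAlternating (n := Fin n) (R := A)).toMultilinearMap.map_sum_finset
    (fun _ v => g v) s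
  refine (congrArg Matrix.det ?_).trans h
  ext i j
  simp

/-- Subtracting consecutive rows in a determinant whose last column is constant equal to `1`. -/
lemma det_eq_det_sub_of_last_col_eq_one {A : Type*} [CommRing A] {n : ℕ}
    (G : Matrix (Fin (n + 1)) (Fin (n + 1)) A) (hG : ∀ i, G i (Fin.last n) = 1) :
    G.det = (Matrix.of fun i j : Fin n => G i.castSucc j.castSucc - G i.succ j.castSucc).det := by
  let B : Matrix (Fin (n + 1)) (Fin (n + 1)) A :=
    .of fun i j => Fin.cases (motive := fun _ => A) (G 0 j) (fun i => G i.succ j - G i.castSucc j) i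
  have hB : G.det = B.det :=
    Matrix.det_eq_of_forall_row_eq_smul_add_pred (fun _ => 1) (fun j => rfl)
      fun i j => by simp [B]
  rw [hB, Matrix.det_succ_column B (Fin.last n), Fin.sum_univ_succ,
    sum_eq_zero fun i _ => by simp [B, hG]]
  have hneg : B.submatrix (Fin.succAbove 0) (Fin.last n).succAbove =
      -Matrix.of fun i j : Fin n => G i.castSucc j.castSucc - G i.succ j.castSucc := by
    ext i j
    simp [B]
  rw [hneg, Matrix.det_neg]
  simp [B, hG, ← mul_assoc, ← mul_pow]

lemma Interlace.strictMono {N : ℕ} {y : Fin N → ℕ} {x : Fin (N + 1) → ℕ} (h : Interlace y x) :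
    StrictMono x :=
  Fin.strictMono_iff_lt_succ.mpr fun i => (h i).1.trans_lt (h i).2

/-- The constraint that `Interlace y z` puts on the value `m` of the single coordinate `z j`. -/
def InterlaceAt {N : ℕ} (y : Fin N → ℕ) (j : Fin (N + 1)) (m : ℕ) : Prop :=
  (∀ k : Fin N, k.castSucc = j → m ≤ y k) ∧ ∀ k : Fin N, k.succ = j → y k < m

lemma interlace_iff_forall_interlaceAt {N : ℕ} {y : Fin N → ℕ} {z : Fin (N + 1) → ℕ} :
    Interlace y z ↔ ∀ j, InterlaceAt y j (z j) := by
  constructor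
  · rintro h j
    exact ⟨fun k hk => hk ▸ (h k).1, fun k hk => hk ▸ (h k).2⟩
  · exact fun h k => ⟨(h _).1 k rfl, (h _).2 k rfl⟩

open Classical in
/-- Column operations: partial sums over the blocks cut out by `y` may be replaced by partial sums
over initial segments. -/
lemma det_tsum_interlaceAt {N : ℕ} {y : Fin N → ℕ} (hy : StrictMono y)
    (a : Fin (N + 1) → ℕ → ℂ) (ha : ∀ i, Summable fun m => ‖a i m‖) :
    (Matrix.of fun i j => ∑' m, (if InterlaceAt y j m then 1 else 0) * a i m).det =
      (Matrix.of fun i j => ∑' m,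
        (if ∀ k : Fin N, k.castSucc = j → m ≤ y k then 1 else 0) * a i m).det := by
  have hs (p : ℕ → Prop) [DecidablePred p] (i) : Summable fun m => (if p m then 1 else 0) * a i m :=
    .of_norm_bounded (ha i) fun m => by split_ifs <;> simp
  symm
  refine Matrix.det_eq_of_forall_col_eq_smul_add_pred (fun _ => 1) (fun i => ?_) fun i j => ?_
  · simp [InterlaceAt]
  · simp only [Matrix.of_apply, one_mul]
    rw [← (hs (InterlaceAt y j.succ) i).tsum_add
      (hs (fun m => ∀ k : Fin N, k.castSucc = j.castSucc → m ≤ y k) i)]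
    congr 1
    ext m
    rw [← add_mul]
    congr 1
    have h1 : InterlaceAt y j.succ m ↔ (∀ k : Fin N, k.castSucc = j.succ → m ≤ y k) ∧ y j < m := by
      simp [InterlaceAt]
    have h2 : (∀ k : Fin N, k.castSucc = j.castSucc → m ≤ y k) ↔ m ≤ y j := by simp
    have h3 : m ≤ y j → ∀ k : Fin N, k.castSucc = j.succ → m ≤ y k := fun h k hk =>
      h.trans (hy.monotone (Fin.castSucc_le_castSucc_iff.mp (hk ▸ Fin.castSucc_lt_succ.le)))
    simp only [h1, h2]
    by_cases hm : m ≤ y j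
    · rw [if_pos (h3 hm)]
      simp [hm]
    · simp [hm, not_le.mp hm]

section Intertwining

variable {lam : ℕ → ℝ} {M R : ℝ} {N : ℕ}

lemma sum_range_eL_sub_sum_range_eL (hpos : ∀ k, 0 < lam k) (hub : ∀ k, lam k ≤ M)
    (hR : M < R) (t : ℝ) {a b : ℕ} (hab : a ≤ b) (y : ℕ) :
    ∑ m ∈ range (y + 1), eL lam R t a m - ∑ m ∈ range (y + 1), eL lam R t b m =
      ∑ v ∈ Ico a b, (lam y : ℂ) * ((lam v : ℂ)⁻¹ * eL lam R t v y) := by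
  rw [sum_range_eL hpos hub hR, sum_range_eL hpos hub hR, sub_sub_sub_cancel_left,
    ← sum_Ico_sub (fun v => tailMass lam R t v (y + 1)) hab]
  refine sum_congr rfl fun v _ => ?_
  rw [tailMass_sub_succ hpos hub hR]
  ring

open Classical in
lemma det_tsum_interlaceAt_eL (hpos : ∀ k, 0 < lam k) (hub : ∀ k, lam k ≤ M) (hR : M < R) (t : ℝ)
    {x : Fin (N + 1) → ℕ} (hx : StrictMono x) {y' : Fin N → ℕ} (hy' : StrictMono y') :
    (Matrix.of fun i j => ∑' m,
      (if InterlaceAt y' j m then 1 else 0) * eL lam R t (x i) m).det =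
      (∏ j, (lam (y' j) : ℂ)) *
        ∑ y ∈ Fintype.piFinset fun i : Fin N => Ico (x i.castSucc) (x i.succ),
        (∏ i, (lam (y i) : ℂ)⁻¹) * (Matrix.of fun i j => eL lam R t (y i) (y' j)).det := by
  rw [det_tsum_interlaceAt hy' _ fun i => summable_norm_eL hpos hub hR t (x i),
    det_eq_det_sub_of_last_col_eq_one]
  · have hF (i : Fin (N + 1)) (j : Fin N) :
        ∑' m, (if ∀ k : Fin N, k.castSucc = j.castSucc → m ≤ y' k then 1 else 0) *
          eL lam R t (x i) m = ∑ m ∈ range (y' j + 1), eL lam R t (x i) m := by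
      rw [tsum_eq_sum (s := range (y' j + 1))]
      · exact sum_congr rfl fun m hm => by simp [Nat.lt_succ_iff.mp (mem_range.mp hm)]
      · intro m hm
        have : ¬ m ≤ y' j := fun h => hm (mem_range.mpr (Nat.lt_succ_of_le h))
        simp [this]
    simp only [Matrix.of_apply, hF]
    simp only [sum_range_eL_sub_sum_range_eL hpos hub hR t (hx Fin.castSucc_lt_succ).le]
    rw [det_of_sum_rows (fun i : Fin N => Ico (x i.castSucc) (x i.succ))
      fun v j => (lam (y' j) : ℂ) * ((lam v : ℂ)⁻¹ * eL lam R t v (y' j)), mul_sum]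
    refine sum_congr rfl fun y _ => ?_
    rw [← Matrix.det_mul_column, ← Matrix.det_mul_row]
    rfl
  · intro i
    simp [Fin.castSucc_ne_last, tsum_eL hpos hub hR]

end Intertwining

/-- the Karlin–McGregor semigroups on W^{N+1} and W^N are intertwined,
P_t^{N+1} Λ_N^{N+1} = Λ_N^{N+1} P_t^N: for all t ≥ 0, x ∈ W^{N+1}, y' ∈ W^N,
Σ_{z ∈ W^{N+1}} det(e^{tL}(x_i,z_j)) ∏ λ(y'_i)⁻¹ 1(y'≺z)
  = Σ_{y ∈ W^N : y ≺ x} ∏ λ(y_i)⁻¹ det(e^{tL}(y_i,y'_j)),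
the series on the left converging absolutely. -/
theorem stmt_8 (lam : ℕ → ℝ) (s M : ℝ) (hs : 0 < s)
    (hlb : ∀ x, s ≤ lam x) (hub : ∀ x, lam x ≤ M)
    (R : ℝ) (hR : M < R) (N : ℕ) (hN : 1 ≤ N) (t : ℝ) (ht : 0 ≤ t)
    (x : Fin (N + 1) → ℕ) (hx : StrictMono x)
    (y' : Fin N → ℕ) (hy' : StrictMono y') :
    HasSum (fun z : { z : Fin (N + 1) → ℕ // StrictMono z } =>
        (Matrix.of fun i j => eL lam R t (x i) (z.1 j)).det *
          ((∏ i, (lam (y' i))⁻¹ : ℝ) : ℂ) * (if Interlace y' z.1 then 1 else 0))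
      (∑' y : { y : Fin N → ℕ // Interlace y x },
        ((∏ i, (lam (y.1 i))⁻¹ : ℝ) : ℂ) *
          (Matrix.of fun i j => eL lam R t (y.1 i) (y' j)).det) ∧
    Summable (fun z : { z : Fin (N + 1) → ℕ // StrictMono z } =>
        ‖(Matrix.of fun i j => eL lam R t (x i) (z.1 j)).det *
          ((∏ i, (lam (y' i))⁻¹ : ℝ) : ℂ) * (if Interlace y' z.1 then 1 else 0)‖) := by
  classical
  have hpos (k : ℕ) : 0 < lam k := hs.trans_le (hlb k)
  have hprod (z : Fin (N + 1) → ℕ) :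
      (∏ j, if InterlaceAt y' j (z j) then (1 : ℂ) else 0) = if Interlace y' z then 1 else 0 := by
    simp [prod_ite_zero, interlace_iff_forall_interlaceAt]
  have hdet := hasSum_det_of
    (fun i j m => (if InterlaceAt y' j m then 1 else 0) * eL lam R t (x i) m) fun i j =>
      .of_nonneg_of_le (fun _ => norm_nonneg _) (fun m => by split_ifs <;> simp)
        (summable_norm_eL hpos hub hR t (x i))
  have hterm (z : Fin (N + 1) → ℕ) :
      (Matrix.of fun i j => eL lam R t (x i) (z j)).det * ((∏ i, (lam (y' i))⁻¹ : ℝ) : ℂ) *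
          (if Interlace y' z then 1 else 0) =
        ((∏ i, (lam (y' i))⁻¹ : ℝ) : ℂ) * (Matrix.of fun i j =>
          (if InterlaceAt y' j (z j) then 1 else 0) * eL lam R t (x i) (z j)).det := by
    have h := Matrix.det_mul_row (fun j => if InterlaceAt y' j (z j) then (1 : ℂ) else 0)
      (Matrix.of fun i j => eL lam R t (x i) (z j))
    simp only [Matrix.of_apply, hprod] at h
    rw [h]
    ring
  constructor
  · have hsum : HasSum (fun z : Fin (N + 1) → ℕ =>
        (Matrix.of fun i j => eL lam R t (x i) (z j)).det * ((∏ i, (lam (y' i))⁻¹ : ℝ) : ℂ) *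
          (if Interlace y' z then 1 else 0)) (∑' y : { y : Fin N → ℕ // Interlace y x },
        ((∏ i, (lam (y.1 i))⁻¹ : ℝ) : ℂ) *
          (Matrix.of fun i j => eL lam R t (y.1 i) (y' j)).det) := by
      simp only [hterm]
      have hne : ∏ j, (lam (y' j) : ℂ) ≠ 0 :=
        prod_ne_zero_iff.mpr fun j _ => ofReal_ne_zero.mpr (hpos _).ne'
      have h := hdet.1.mul_left ((∏ i, (lam (y' i))⁻¹ : ℝ) : ℂ)
      rw [det_tsum_interlaceAt_eL hpos hub hR t hx hy', ofReal_prod] at h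
      simp only [ofReal_inv] at h
      rw [prod_inv_distrib, inv_mul_cancel_left₀ hne, ← Finset.tsum_subtype'] at h
      simp only [ofReal_prod, ofReal_inv, prod_inv_distrib] at h ⊢
      suffices heq : ∑' y : { y : Fin N → ℕ // Interlace y x }, (∏ i, (lam (y.1 i) : ℂ))⁻¹ *
          (Matrix.of fun i j => eL lam R t (y.1 i) (y' j)).det = _ by rw [heq]; exact h
      refine (Equiv.subtypeEquivRight fun y => ?_).tsum_eq
        (fun y : ↥((Fintype.piFinset fun i : Fin N => Ico (x i.castSucc) (x i.succ) : Finset _) :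
          Set (Fin N → ℕ)) => (∏ i, (lam (y.1 i) : ℂ))⁻¹ *
            (Matrix.of fun i j => eL lam R t (y.1 i) (y' j)).det)
      simp [Interlace]
    refine (hasSum_subtype_iff_of_support_subset (s := {z | StrictMono z}) fun z hz => ?_).mpr hsum
    by_contra hmono
    exact hz (by simp [mt Interlace.strictMono hmono])
  · simp only [hterm, norm_mul]
    exact (hdet.2.mul_left _).comp_injective Subtype.val_injective
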